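/- arXiv:1003.0887 — 2 statements merged into one kernel-verified Lean document; each statement's English description precedes it below -/
import Mathlib

section
/- Let X be a compact Hausdorff space and let k be a continuous symmetric positive definite kernel on X with RKHS H. Then k is c-universal if and only if the embedding μ ↦ ∫_X k(·,x) dμ(x) from M_b(X) into H is injective, i.e., ∫_X k(·,x) dμ(x) = 0 implies μ = 0 for every μ ∈ M_b(X). -/
open MeasureTheory Filter Topology RealInnerProductSpace

/-- Integral of a vector-valued function with respect to a finite signed measure,
defined via the Jordan decomposition. -/
noncomputable def svInt {X : Type*} [MeasurableSpace X] {E : Type*}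
    [NormedAddCommGroup E] [NormedSpace ℝ E]
    (μ : MeasureTheory.SignedMeasure X) (f : X → E) : E :=
  (∫ x, f x ∂μ.toJordanDecomposition.posPart) - ∫ x, f x ∂μ.toJordanDecomposition.negPart

/-!
By Hahn–Banach, a subspace of `C(X, ℝ)` is dense iff no nonzero continuous functional annihilates
it, and by Riesz–Markov–Kakutani these functionals are exactly the integrals against signed Radon
measures. Applied to the functions `x ↦ L (Φ x)` with `L` in the dual of the target of `Φ`, this
gives the theorem: pulling `L` out of the integral shows that a measure annihilates all of them iff
`∫ Φ dμ = 0`.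

Mathlib's Riesz–Markov–Kakutani theorem concerns positive functionals. To write a functional `L` on
a normed lattice `E` as a difference of positive ones, extend `(f, -f, c) ↦ L f + ‖L‖ c` from a
subspace of `E × E × ℝ` by M. Riesz's extension theorem to a functional that is nonnegative on
`jointMajorantCone E`; its restrictions to the first two factors are positive with difference `L`.
-/

section OrderedNormedSpace

variable {E : Type*} [NormedAddCommGroup E] [NormedSpace ℝ E] [PartialOrder E]
  [IsOrderedAddMonoid E] [PosSMulMono ℝ E]

variable (E) in
/-- The cone of triples `(f, g, c)` such that `f` and `g` both become nonnegative after adding one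
vector of norm at most `c`. Positive functionals on this cone encode pairs of positive functionals
on `E` whose difference is controlled in norm. -/
def jointMajorantCone : PointedCone ℝ (E × E × ℝ) where
  carrier := {p | ∃ u : E, ‖u‖ ≤ p.2.2 ∧ 0 ≤ p.1 + u ∧ 0 ≤ p.2.1 + u}
  zero_mem' := ⟨0, by simp⟩
  add_mem' := by
    rintro p q ⟨u, hu, hpu, hpu'⟩ ⟨v, hv, hqv, hqv'⟩
    refine ⟨u + v, norm_add_le_of_le hu hv, ?_, ?_⟩
    · simpa only [Prod.fst_add, add_add_add_comm] using add_nonneg hpu hqv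
    · simpa only [Prod.snd_add, Prod.fst_add, add_add_add_comm] using add_nonneg hpu' hqv'
  smul_mem' := by
    rintro ⟨c, hc⟩ p ⟨u, hu, hpu, hpu'⟩
    refine ⟨c • u, ?_, ?_, ?_⟩
    · simpa [norm_smul, abs_of_nonneg hc] using mul_le_mul_of_nonneg_left hu hc
    · exact (smul_nonneg hc hpu).trans_eq (smul_add c p.1 u)
    · exact (smul_nonneg hc hpu').trans_eq (smul_add c p.2.1 u)

theorem mem_jointMajorantCone_of_nonneg {f g : E} (hf : 0 ≤ f) (hg : 0 ≤ g) :
    (f, g, (0 : ℝ)) ∈ jointMajorantCone E :=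
  ⟨0, by simp, by simpa using hf, by simpa using hg⟩

end OrderedNormedSpace

section NormedLattice

variable {E : Type*} [NormedAddCommGroup E] [NormedSpace ℝ E] [Lattice E] [IsOrderedAddMonoid E]
  [PosSMulMono ℝ E]

theorem exists_add_mem_jointMajorantCone (p : E × E × ℝ) :
    ∃ c : ℝ, (0, 0, c) + p ∈ jointMajorantCone E := by
  obtain ⟨f, g, t⟩ := p
  have hnonneg (h : E) : 0 ≤ h + |h| := neg_le_iff_add_nonneg'.1 (neg_le_abs h)
  refine ⟨‖|f| + |g|‖ - t, |f| + |g|, by simp, ?_, ?_⟩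
  · simpa only [Prod.fst_add, zero_add, add_assoc] using add_nonneg (hnonneg f) (abs_nonneg g)
  · simpa only [Prod.snd_add, Prod.fst_add, zero_add, add_left_comm] using
      add_nonneg (abs_nonneg f) (hnonneg g)

theorem norm_le_of_antidiagonal_mem_jointMajorantCone [HasSolidNorm E] {f : E} {c : ℝ}
    (h : (f, -f, c) ∈ jointMajorantCone E) : ‖f‖ ≤ c := by
  obtain ⟨u, hu, hfu, hfu'⟩ := h
  have habs : |f| ≤ |u| :=
    (abs_le'.2 ⟨by simpa using hfu', neg_le_iff_add_nonneg'.2 hfu⟩).trans (le_abs_self u)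
  exact (norm_le_norm_of_abs_le_abs habs).trans hu

theorem exists_positiveLinearMap_sub_eq [HasSolidNorm E] (L : StrongDual ℝ E) :
    ∃ P Q : E →ₚ[ℝ] ℝ, ∀ f, L f = P f - Q f := by
  let antidiagonal : E × E × ℝ →ₗ.[ℝ] ℝ :=
    { domain := LinearMap.eqLocus (.fst ℝ E ℝ ∘ₗ .snd ℝ E (E × ℝ)) (-.fst ℝ E (E × ℝ))
      toFun := LinearMap.domRestrict (L.toLinearMap.coprod (‖L‖ • LinearMap.snd ℝ E ℝ)) _ }
  have hnonneg (p : antidiagonal.domain) :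
      (p : E × E × ℝ) ∈ jointMajorantCone E → 0 ≤ antidiagonal p := by
    obtain ⟨⟨f, g, c⟩, rfl : g = -f⟩ := p
    intro hp
    have hL : -L f ≤ ‖L‖ * c := calc
      -L f ≤ ‖L f‖ := neg_le_abs (L f)
      _ ≤ ‖L‖ * ‖f‖ := L.le_opNorm f
      _ ≤ ‖L‖ * c := by gcongr; exact norm_le_of_antidiagonal_mem_jointMajorantCone hp
    exact neg_le_iff_add_nonneg'.1 hL
  obtain ⟨M, hML, hM⟩ := riesz_extension (jointMajorantCone E) antidiagonal hnonneg fun p =>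
    (exists_add_mem_jointMajorantCone p).imp' (fun c => ⟨(0, 0, c), neg_zero.symm⟩) fun _ => id
  let P : E →ₚ[ℝ] ℝ := .mk₀ (M ∘ₗ .inl ℝ E (E × ℝ)) fun f hf =>
    hM _ (mem_jointMajorantCone_of_nonneg hf le_rfl)
  let Q : E →ₚ[ℝ] ℝ := .mk₀ (M ∘ₗ .inr ℝ E (E × ℝ) ∘ₗ .inl ℝ E ℝ) fun f hf =>
    hM _ (mem_jointMajorantCone_of_nonneg le_rfl hf)
  refine ⟨P, Q, fun f => ?_⟩
  calc L f = M (f, -f, 0) := by simpa [antidiagonal] using (hML ⟨(f, -f, 0), rfl⟩).symm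
    _ = M (f, 0, 0) - M (0, f, 0) := by rw [← map_sub]; simp

end NormedLattice

theorem dense_of_forall_strongDual_eq_zero {E : Type*} [AddCommGroup E] [Module ℝ E]
    [TopologicalSpace E] [IsTopologicalAddGroup E] [ContinuousSMul ℝ E] [LocallyConvexSpace ℝ E]
    (S : Submodule ℝ E) (hS : ∀ L : StrongDual ℝ E, (∀ s ∈ S, L s = 0) → L = 0) :
    Dense (S : Set E) := by
  intro g
  by_contra hg
  obtain ⟨L, u, hLu, hu⟩ :=
    geometric_hahn_banach_closed_point S.convex.closure isClosed_closure hg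
  have hu0 : 0 < u := by simpa using hLu 0 (subset_closure S.zero_mem)
  have hL (s : E) (hs : s ∈ S) : L s = 0 := by
    by_contra hne
    have h := hLu ((u / L s) • s) (subset_closure (S.smul_mem _ hs))
    rw [map_smul, smul_eq_mul, div_mul_cancel₀ _ hne] at h
    exact lt_irrefl _ h
  simp [hS L hL, hu0.not_gt] at hu

section InnerRegular

variable {X : Type*} [TopologicalSpace X] [T2Space X] [MeasurableSpace X]

theorem innerRegular_of_le [OpensMeasurableSpace X] {μ ν : Measure X} [IsFiniteMeasure ν]
    [ν.InnerRegular] (h : μ ≤ ν) : μ.InnerRegular := by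
  refine ⟨fun A hA r hr => ?_⟩
  obtain ⟨K, hKA, hK, hlt⟩ :=
    hA.exists_isCompact_sdiff_lt (measure_ne_top ν A) (tsub_pos_of_lt hr).ne'
  refine ⟨K, hKA, hK, lt_of_tsub_lt_tsub_left (a := μ A) ?_⟩
  calc μ A - μ K ≤ μ (A \ K) := le_measure_sdiff
    _ ≤ ν (A \ K) := h _
    _ < μ A - r := hlt

theorem innerRegular_totalVariation_toSignedMeasure_sub [OpensMeasurableSpace X] (μ ν : Measure X)
    [IsFiniteMeasure μ] [IsFiniteMeasure ν] [μ.InnerRegular] [ν.InnerRegular] :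
    (μ.toSignedMeasure - ν.toSignedMeasure).totalVariation.InnerRegular := by
  refine innerRegular_of_le (ν := μ + ν) ?_
  rw [SignedMeasure.totalVariation, Measure.toJordanDecomposition_toSignedMeasure_sub]
  exact add_le_add Measure.sub_le Measure.sub_le

end InnerRegular

section SignedIntegral

variable {X : Type*} [MeasurableSpace X] {E : Type*} [NormedAddCommGroup E] [NormedSpace ℝ E]

theorem svInt_zero_measure (f : X → E) : svInt 0 f = 0 := by
  simp [svInt, SignedMeasure.toJordanDecomposition_zero]

theorem svInt_toSignedMeasure_sub {μ ν : Measure X} [IsFiniteMeasure μ] [IsFiniteMeasure ν]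
    {f : X → E} (hμ : Integrable f μ) (hν : Integrable f ν) :
    svInt (μ.toSignedMeasure - ν.toSignedMeasure) f = ∫ x, f x ∂μ - ∫ x, f x ∂ν := by
  have hadd : μ - ν + ν = μ + (ν - μ) := by
    rw [← Measure.toSignedMeasure_eq_toSignedMeasure_iff, Measure.toSignedMeasure_add,
      Measure.toSignedMeasure_add]
    exact sub_eq_sub_iff_add_eq_add.1
      Measure.jordanDecompositionOfToSignedMeasureSub_toSignedMeasure
  rw [svInt, Measure.toJordanDecomposition_toSignedMeasure_sub, sub_eq_sub_iff_add_eq_add]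
  change ∫ x, f x ∂(μ - ν) + ∫ x, f x ∂ν = ∫ x, f x ∂μ + ∫ x, f x ∂(ν - μ)
  rw [← integral_add_measure (hμ.mono_measure Measure.sub_le) hν, hadd,
    integral_add_measure hμ (hν.mono_measure Measure.sub_le)]

theorem svInt_clm_comp_comm {F : Type*} [NormedAddCommGroup F] [NormedSpace ℝ F]
    [CompleteSpace E] [CompleteSpace F] {μ : SignedMeasure X} {f : X → E}
    (hf : Integrable f μ.totalVariation) (L : E →L[ℝ] F) :
    svInt μ (fun x => L (f x)) = L (svInt μ f) := by
  obtain ⟨hpos, hneg⟩ := integrable_add_measure.1 hf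
  rw [svInt, svInt, map_sub, L.integral_comp_comm hpos, L.integral_comp_comm hneg]

theorem svInt_eq_zero_iff_forall_strongDual [CompleteSpace E] {μ : SignedMeasure X} {f : X → E}
    (hf : Integrable f μ.totalVariation) :
    svInt μ f = 0 ↔ ∀ L : StrongDual ℝ E, svInt μ (fun x => L (f x)) = 0 := by
  simp only [svInt_clm_comp_comm hf]
  exact SeparatingDual.eq_zero_iff_forall_dual_eq_zero _

end SignedIntegral

section CompactSpace

variable {X : Type*} [TopologicalSpace X] [CompactSpace X]

instance instHasSolidNormContinuousMap : HasSolidNorm C(X, ℝ) where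
  solid f g h := (ContinuousMap.norm_le f (norm_nonneg g)).2 fun x =>
    (h x).trans (g.norm_coe_le_norm x)

theorem denseRange_continuousMap_iff_forall_dist_le {ι E : Type*} [PseudoMetricSpace E]
    {F : ι → C(X, E)} :
    DenseRange F ↔ ∀ (g : C(X, E)) (ε : ℝ), 0 < ε → ∃ i, ∀ x, dist (F i x) (g x) ≤ ε := by
  refine forall_congr' fun g => (mem_closure_iff_nhds_basis Metric.nhds_basis_closedBall).trans ?_
  refine forall₂_congr fun ε hε => Set.exists_range_iff.trans (exists_congr fun i => ?_)
  exact ContinuousMap.dist_le hε.le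

variable [MeasurableSpace X]

theorem integrable_of_continuous_of_compactSpace [OpensMeasurableSpace X] {E : Type*}
    [NormedAddCommGroup E] {f : X → E} (hf : Continuous f) (μ : Measure X) [IsFiniteMeasure μ] :
    Integrable f μ :=
  hf.integrable_of_hasCompactSupport (.of_compactSpace f)

theorem continuous_svInt (μ : SignedMeasure X) {E : Type*} [NormedAddCommGroup E]
    [NormedSpace ℝ E] [BorelSpace X] [SecondCountableTopologyEither X E] :
    Continuous fun f : C(X, E) => svInt μ f := by
  have hcont (ν : Measure X) [IsFiniteMeasure ν] : Continuous fun f : C(X, E) => ∫ x, f x ∂ν :=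
    (continuous_integral.comp (ContinuousMap.toLp 1 ν ℝ).continuous).congr fun f =>
      integral_congr_ae (ContinuousMap.coeFn_toLp ν f)
  exact (hcont _).sub (hcont _)

variable [T2Space X] [BorelSpace X]

theorem exists_regular_integral_eq (P : C(X, ℝ) →ₚ[ℝ] ℝ) :
    ∃ μ : Measure X, IsFiniteMeasure μ ∧ μ.Regular ∧ ∀ f : C(X, ℝ), ∫ x, f x ∂μ = P f := by
  let Λ : CompactlySupportedContinuousMap X ℝ →ₚ[ℝ] ℝ :=
    { toFun := fun g => P g
      map_add' := fun f g => map_add P (f : C(X, ℝ)) g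
      map_smul' := fun c f => map_smul P c (f : C(X, ℝ))
      monotone' := fun f g h => P.monotone' h }
  exact ⟨RealRMK.rieszMeasure Λ, inferInstance, inferInstance, fun f =>
    RealRMK.integral_rieszMeasure Λ (CompactlySupportedContinuousMap.continuousMapEquiv f)⟩

theorem exists_innerRegular_svInt_eq (L : StrongDual ℝ C(X, ℝ)) :
    ∃ μ : SignedMeasure X, μ.totalVariation.InnerRegular ∧ ∀ f : C(X, ℝ), svInt μ f = L f := by
  obtain ⟨P, Q, hPQ⟩ := exists_positiveLinearMap_sub_eq L
  obtain ⟨μ, _, _, hμ⟩ := exists_regular_integral_eq P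
  obtain ⟨ν, _, _, hν⟩ := exists_regular_integral_eq Q
  refine ⟨μ.toSignedMeasure - ν.toSignedMeasure,
    innerRegular_totalVariation_toSignedMeasure_sub μ ν, fun f => ?_⟩
  rw [svInt_toSignedMeasure_sub (integrable_of_continuous_of_compactSpace f.continuous μ)
    (integrable_of_continuous_of_compactSpace f.continuous ν), hμ, hν, hPQ]

theorem signedMeasure_eq_zero_of_forall_svInt_eq_zero {μ : SignedMeasure X}
    (hμ : μ.totalVariation.InnerRegular) (h : ∀ f : C(X, ℝ), svInt μ f = 0) : μ = 0 := by
  have hpos : μ.toJordanDecomposition.posPart.InnerRegular :=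
    innerRegular_of_le (ν := μ.totalVariation) (Measure.le_add_right le_rfl)
  have hneg : μ.toJordanDecomposition.negPart.InnerRegular :=
    innerRegular_of_le (ν := μ.totalVariation) (Measure.le_add_left le_rfl)
  have heq : μ.toJordanDecomposition.posPart = μ.toJordanDecomposition.negPart :=
    Measure.ext_of_integral_eq_on_compactlySupported fun f => sub_eq_zero.1 (h f)
  rw [← μ.toSignedMeasure_toJordanDecomposition, JordanDecomposition.toSignedMeasure, sub_eq_zero]
  exact Measure.toSignedMeasure_congr heq

theorem dense_iff_forall_svInt_eq_zero (S : Submodule ℝ C(X, ℝ)) :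
    Dense (S : Set C(X, ℝ)) ↔ ∀ μ : SignedMeasure X, μ.totalVariation.InnerRegular →
      (∀ f ∈ S, svInt μ f = 0) → μ = 0 := by
  refine ⟨fun hS μ hμ hμS => ?_, fun h => dense_of_forall_strongDual_eq_zero S fun L hL => ?_⟩
  · have hμ0 := (continuous_svInt μ).ext_on hS continuous_const hμS
    exact signedMeasure_eq_zero_of_forall_svInt_eq_zero hμ (congrFun hμ0)
  · obtain ⟨μ, hμ, hμL⟩ := exists_innerRegular_svInt_eq L
    have hμ0 : μ = 0 := h μ hμ fun f hf => (hμL f).trans (hL f hf)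
    ext f
    rw [← hμL, hμ0, svInt_zero_measure, zero_apply]

end CompactSpace

section FeatureMap

/-- The functions `x ↦ L (Φ x)` induced by a continuous feature map `Φ`, as a linear function of the
functional `L`. Its range plays the role of the RKHS when `E` is a Hilbert space. -/
def featureFunction {X E : Type*} [TopologicalSpace X] [NormedAddCommGroup E] [NormedSpace ℝ E]
    (Φ : C(X, E)) : StrongDual ℝ E →ₗ[ℝ] C(X, ℝ) where
  toFun L := (L : C(E, ℝ)).comp Φ
  map_add' _ _ := rfl
  map_smul' _ _ := rfl

theorem continuous_of_continuous_inner {X H : Type*} [TopologicalSpace X]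
    [SeminormedAddCommGroup H] [InnerProductSpace ℝ H] {Φ : X → H}
    (h : Continuous fun p : X × X => ⟪Φ p.1, Φ p.2⟫) : Continuous Φ := by
  refine continuous_iff_continuousAt.2 fun x => tendsto_iff_norm_sub_tendsto_zero.2 ?_
  have hnorm (y : X) : ‖Φ y - Φ x‖ = √(⟪Φ y, Φ y⟫ - 2 * ⟪Φ y, Φ x⟫ + ⟪Φ x, Φ x⟫) := by
    rw [real_inner_self_eq_norm_sq, real_inner_self_eq_norm_sq, ← norm_sub_sq_real,
      Real.sqrt_sq (norm_nonneg _)]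
  have hdiag : Continuous fun y => ⟪Φ y, Φ y⟫ := h.comp (continuous_id.prodMk continuous_id)
  have hright : Continuous fun y => ⟪Φ y, Φ x⟫ := h.comp (continuous_id.prodMk continuous_const)
  have hcont : Continuous fun y => ‖Φ y - Φ x‖ := by
    simp only [hnorm]
    fun_prop
  simpa using hcont.tendsto x

end FeatureMap

theorem stmt0_general {X : Type*} [TopologicalSpace X] [CompactSpace X] [T2Space X]
    [MeasurableSpace X] [BorelSpace X] {E : Type*} [NormedAddCommGroup E] [NormedSpace ℝ E]
    [CompleteSpace E] {Φ : X → E} (hΦ : Continuous Φ) :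
    (∀ (g : C(X, ℝ)) (ε : ℝ), 0 < ε → ∃ L : StrongDual ℝ E, ∀ x, |L (Φ x) - g x| ≤ ε) ↔
      ∀ μ : SignedMeasure X, μ.totalVariation.InnerRegular → svInt μ Φ = 0 → μ = 0 := by
  let F := featureFunction ⟨Φ, hΦ⟩
  have hannihilates (μ : SignedMeasure X) :
      svInt μ Φ = 0 ↔ ∀ f ∈ LinearMap.range F, svInt μ f = 0 := by
    rw [svInt_eq_zero_iff_forall_strongDual (integrable_of_continuous_of_compactSpace hΦ _)]
    exact (Set.forall_mem_range (f := F) (p := fun f => svInt μ f = 0)).symm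
  simp only [hannihilates]
  exact (denseRange_continuousMap_iff_forall_dist_le (F := F)).symm.trans
    (dense_iff_forall_svInt_eq_zero (LinearMap.range F))

/-- Let `X` be a compact Hausdorff space and `k` a continuous symmetric
positive definite kernel on `X` with RKHS `H` (realized by the injective linear map
`T : H →ₗ[ℝ] (X → ℝ)` and feature map `Φ` with `k x y = ⟪Φ x, Φ y⟫` and the reproducing
property `T f x = ⟪f, Φ x⟫`).  Then `k` is c-universal (its RKHS is uniformly dense in
`C(X)`) iff the embedding `μ ↦ ∫ k(·,x) dμ(x)` of the finite signed Radon measures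
into `H` is injective. -/
theorem stmt0
    {X : Type*} [TopologicalSpace X] [CompactSpace X] [T2Space X]
    [MeasurableSpace X] [BorelSpace X]
    (k : X → X → ℝ) (hkcont : Continuous fun p : X × X => k p.1 p.2)
    {H : Type*} [NormedAddCommGroup H] [InnerProductSpace ℝ H] [CompleteSpace H]
    (T : H →ₗ[ℝ] (X → ℝ)) (hT : Function.Injective T)
    (Φ : X → H)
    (hk : ∀ x y : X, k x y = ⟪Φ x, Φ y⟫)
    (hrepro : ∀ (f : H) (x : X), T f x = ⟪f, Φ x⟫) :
    (∀ (g : C(X, ℝ)) (ε : ℝ), 0 < ε → ∃ f : H, ∀ x : X, |T f x - g x| ≤ ε) ↔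
      ∀ μ : MeasureTheory.SignedMeasure X, μ.totalVariation.InnerRegular →
        svInt μ Φ = 0 → μ = 0 := by
  have hΦ : Continuous Φ := continuous_of_continuous_inner (by simpa only [hk] using hkcont)
  simpa only [(InnerProductSpace.toDual ℝ H).surjective.exists,
    InnerProductSpace.toDual_apply_apply, hrepro] using stmt0_general hΦ
end

section
/- Let X be a locally compact Hausdorff space and let k be a symmetric positive definite kernel on X that is bounded and continuous on X × X, with RKHS H. If k is cc-universal, then k is strictly positive definite. In particular, a c-universal kernel on a compact Hausdorff space and a c0-universal kernel (bounded with k(·,x) ∈ C_0(X) for all x) on a locally compact Hausdorff space are strictly positive definite. -/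
open MeasureTheory Filter Topology RealInnerProductSpace
open scoped ZeroAtInfty

/-- A symmetric kernel `k` is strictly positive definite if for every `n`, mutually
distinct `x₁,…,xₙ` and real `α₁,…,αₙ` not all zero, `∑_{l,j} α_l α_j k(x_l,x_j) > 0`. -/
def StrictlyPD {X : Type*} (k : X → X → ℝ) : Prop :=
  ∀ (n : ℕ) (x : Fin n → X), Function.Injective x →
    ∀ α : Fin n → ℝ, α ≠ 0 → 0 < ∑ l, ∑ j, α l * α j * k (x l) (x j)

/-!
The quadratic form of a kernel `k x y = ⟪Φ x, Φ y⟫` at points `x₁, …, xₙ` is that of the Gram matrix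
of `Φ x₁, …, Φ xₙ`, so `k` is strictly positive definite exactly when the feature map is linearly
independent. A relation `∑ αᵢ Φ xᵢ = 0` would force `∑ αᵢ f(xᵢ) = 0` for every `f` in the RKHS.
A cc-universal RKHS takes values at `x₁, …, xₙ` arbitrarily close to any prescribed ones, since
every function on a finite set of points is continuous, and so all `αᵢ` vanish. By Tietze's theorem
every continuous function on a compact set extends to one with compact support, which makes
c- and c₀-universality special cases of cc-universality.
-/

theorem linearIndependent_of_denseRange {R M ι α : Type*} [Ring R] [TopologicalSpace R]
    [IsTopologicalSemiring R] [T2Space R] [AddCommGroup M] [Module R M] {v : ι → M}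
    {φ : α → M →ₗ[R] R} (hφ : DenseRange fun a i => φ a (v i)) : LinearIndependent R v := by
  classical
  refine linearIndependent_iff'.mpr fun s c hc i hi => ?_
  have hrel : (fun y : ι → R => ∑ j ∈ s, c j * y j) = fun _ => 0 := by
    refine hφ.equalizer (by fun_prop) continuous_const (funext fun a => ?_)
    simpa using congrArg (φ a) hc
  simpa [Pi.single_apply, hi] using congrFun hrel (Pi.single i 1)

theorem posDef_gram_iff_forall_sum_pos {ι E : Type*} [Fintype ι] [NormedAddCommGroup E]
    [InnerProductSpace ℝ E] {v : ι → E} :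
    (Matrix.gram ℝ v).PosDef ↔
      ∀ α : ι → ℝ, α ≠ 0 → 0 < ∑ l, ∑ j, α l * α j * ⟪v l, v j⟫ := by
  rw [Matrix.posDef_iff_dotProduct_mulVec]
  have hform (α : ι → ℝ) :
      star α ⬝ᵥ Matrix.mulVec (Matrix.gram ℝ v) α = ∑ l, ∑ j, α l * α j * ⟪v l, v j⟫ := by
    simp only [dotProduct, Matrix.mulVec, Finset.mul_sum, Matrix.gram_apply, star_trivial,
      mul_assoc, mul_comm]
  simp only [Matrix.isHermitian_gram, true_and, hform]

theorem strictlyPD_iff_linearIndependent {X H : Type*} [NormedAddCommGroup H]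
    [InnerProductSpace ℝ H] {k : X → X → ℝ} {Φ : X → H} (hk : ∀ x y, k x y = ⟪Φ x, Φ y⟫) :
    StrictlyPD k ↔ LinearIndependent ℝ Φ := by
  have hgram : StrictlyPD k ↔
      ∀ (n : ℕ) (x : Fin n → X), Function.Injective x → LinearIndependent ℝ (Φ ∘ x) := by
    simp only [StrictlyPD, hk, ← Matrix.posDef_gram_iff_linearIndependent,
      posDef_gram_iff_forall_sum_pos, Function.comp_apply]
  refine hgram.trans ⟨fun h => ?_, fun h n x hx => h.comp x hx⟩
  refine linearIndependent_iff_finset_linearIndependent.mpr fun s => ?_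
  exact (linearIndependent_equiv s.equivFin.symm).mp
    (h s.card _ (Subtype.val_injective.comp s.equivFin.symm.injective))

theorem exists_hasCompactSupport_restrict_eq.{u, v} {X : Type u} {E : Type v} [TopologicalSpace X]
    [T2Space X] [LocallyCompactSpace X] [TopologicalSpace E] [AddCommGroup E] [Module ℝ E]
    [ContinuousSMul ℝ E] [TietzeExtension.{u} E] {Z : Set X} (hZ : IsCompact Z) (g : C(Z, E)) :
    ∃ G : C(X, E), HasCompactSupport G ∧ G.restrict Z = g := by
  have : CompactSpace Z := isCompact_iff_compactSpace.mp hZ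
  -- `X` need not be normal, so Tietze's theorem is applied in its one-point compactification.
  have hemb : IsClosedEmbedding fun z : Z => ((z : X) : OnePoint X) :=
    (OnePoint.continuous_coe.comp continuous_subtype_val).isClosedEmbedding
      (OnePoint.coe_injective.comp Subtype.val_injective)
  obtain ⟨G, hG⟩ := g.exists_extension' hemb
  obtain ⟨χ, hχ, -, hχc, -⟩ :=
    exists_continuous_one_zero_of_isCompact hZ isClosed_empty (Set.disjoint_empty Z)
  refine ⟨⟨fun x => χ x • G x, χ.continuous.smul (G.continuous.comp OnePoint.continuous_coe)⟩,
    hχc.smul_right, ?_⟩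
  ext z
  simpa [hχ z.2] using congrFun hG z

section Universality

variable {X α : Type*} [TopologicalSpace X] {T : α → X → ℝ}

/-- cc-universality of a family `T` of real functions: its restrictions to every compact set `Z`
are uniformly dense in `C(Z, ℝ)`. A kernel is cc-universal when this holds for the evaluation map
`T` of its RKHS. Continuity of the members of the family is not part of the definition. -/
def IsCCUniversal (T : α → X → ℝ) : Prop :=
  ∀ Z : Set X, IsCompact Z → ∀ (g : C(Z, ℝ)) (ε : ℝ), 0 < ε → ∃ a, ∀ x : Z, |T a x - g x| ≤ ε

/-- c₀-universality of a family `T` of real functions: every function in `C₀(X, ℝ)` is a uniform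
limit of members. A kernel is c₀-universal when this holds for the evaluation map `T` of its RKHS.
Membership of the family in `C₀(X, ℝ)` is not part of the definition. -/
def IsC0Universal (T : α → X → ℝ) : Prop :=
  ∀ (g : C₀(X, ℝ)) (ε : ℝ), 0 < ε → ∃ a, ∀ x, |T a x - g x| ≤ ε

theorem IsC0Universal.isCCUniversal [T2Space X] [LocallyCompactSpace X] (hT : IsC0Universal T) :
    IsCCUniversal T := by
  intro Z hZ g ε hε
  obtain ⟨G, hG, rfl⟩ := exists_hasCompactSupport_restrict_eq hZ g
  obtain ⟨a, ha⟩ := hT ⟨G, hG.is_zero_at_infty⟩ ε hε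
  exact ⟨a, fun x => ha x⟩

theorem IsCCUniversal.denseRange_eval [T1Space X] (hT : IsCCUniversal T) {ι : Type*} [Finite ι]
    {x : ι → X} (hx : Function.Injective x) : DenseRange fun a i => T a (x i) := by
  have := Fintype.ofFinite ι
  refine Metric.denseRange_iff.mpr fun u ε hε => ?_
  let g : C(Set.range x, ℝ) := ⟨u ∘ (Equiv.ofInjective x hx).symm, continuous_of_discreteTopology⟩
  obtain ⟨a, ha⟩ := hT (Set.range x) (Set.finite_range x).isCompact g (ε / 2) (half_pos hε)
  refine ⟨a, (dist_pi_lt_iff hε).mpr fun i => ?_⟩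
  calc dist (u i) (T a (x i)) = |T a (x i) - g ⟨x i, i, rfl⟩| := by
        simp [g, Real.dist_eq, abs_sub_comm]
    _ ≤ ε / 2 := ha ⟨x i, i, rfl⟩
    _ < ε := half_lt_self hε

end Universality

theorem stmt6_general {X H : Type*} [TopologicalSpace X] [T1Space X] [NormedAddCommGroup H]
    [InnerProductSpace ℝ H] {k : X → X → ℝ} {T : H → X → ℝ} {Φ : X → H}
    (hk : ∀ x y, k x y = ⟪Φ x, Φ y⟫) (hTΦ : ∀ f x, T f x = ⟪f, Φ x⟫) (hT : IsCCUniversal T) :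
    StrictlyPD k := by
  refine (strictlyPD_iff_linearIndependent hk).mpr ?_
  refine linearIndependent_iff_finset_linearIndependent.mpr fun s => ?_
  refine linearIndependent_of_denseRange (φ := fun f : H => innerₗ H f) ?_
  simpa [hTΦ] using hT.denseRange_eval (Subtype.val_injective (p := (· ∈ s)))

/-- A cc-universal kernel (bounded, continuous, on a locally compact
Hausdorff space) is strictly positive definite; in particular, a c-universal kernel on a
compact Hausdorff space, and a c₀-universal kernel (bounded, with `k(·,x) ∈ C₀(X)`) on a
locally compact Hausdorff space, are strictly positive definite.  In each case the
RKHS `H` of `k` is presented by an injective linear map `T : H →ₗ[ℝ] (X → ℝ)` and a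
feature map `Φ` with `k x y = ⟪Φ x, Φ y⟫` and `T f x = ⟪f, Φ x⟫`. -/
theorem stmt6 :
    (∀ (X : Type) [TopologicalSpace X] [T2Space X] [LocallyCompactSpace X]
        (k : X → X → ℝ), (Continuous fun p : X × X => k p.1 p.2) →
        (∃ C : ℝ, ∀ x y : X, |k x y| ≤ C) →
        ∀ (H : Type) [NormedAddCommGroup H] [InnerProductSpace ℝ H] [CompleteSpace H]
          (T : H →ₗ[ℝ] (X → ℝ)) (Φ : X → H),
          Function.Injective T →
          (∀ x y : X, k x y = ⟪Φ x, Φ y⟫) →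
          (∀ (f : H) (x : X), T f x = ⟪f, Φ x⟫) →
          (∀ (Z : Set X), IsCompact Z → ∀ (g : C(Z, ℝ)) (ε : ℝ), 0 < ε →
            ∃ f : H, ∀ x : Z, |T f (x : X) - g x| ≤ ε) →
          StrictlyPD k) ∧
    (∀ (X : Type) [TopologicalSpace X] [CompactSpace X] [T2Space X]
        (k : X → X → ℝ), (Continuous fun p : X × X => k p.1 p.2) →
        ∀ (H : Type) [NormedAddCommGroup H] [InnerProductSpace ℝ H] [CompleteSpace H]
          (T : H →ₗ[ℝ] (X → ℝ)) (Φ : X → H),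
          Function.Injective T →
          (∀ x y : X, k x y = ⟪Φ x, Φ y⟫) →
          (∀ (f : H) (x : X), T f x = ⟪f, Φ x⟫) →
          (∀ (g : C(X, ℝ)) (ε : ℝ), 0 < ε → ∃ f : H, ∀ x : X, |T f x - g x| ≤ ε) →
          StrictlyPD k) ∧
    (∀ (X : Type) [TopologicalSpace X] [T2Space X] [LocallyCompactSpace X]
        (k : X → X → ℝ), (∃ C : ℝ, ∀ x y : X, |k x y| ≤ C) →
        (∀ x : X, Continuous (fun y => k y x) ∧
          Tendsto (fun y => k y x) (cocompact X) (𝓝 0)) →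
        ∀ (H : Type) [NormedAddCommGroup H] [InnerProductSpace ℝ H] [CompleteSpace H]
          (T : H →ₗ[ℝ] (X → ℝ)) (Φ : X → H),
          Function.Injective T →
          (∀ x y : X, k x y = ⟪Φ x, Φ y⟫) →
          (∀ (f : H) (x : X), T f x = ⟪f, Φ x⟫) →
          (∀ (g : C₀(X, ℝ)) (ε : ℝ), 0 < ε → ∃ f : H, ∀ x : X, |T f x - g x| ≤ ε) →
          StrictlyPD k) := by
  refine ⟨?_, ?_, ?_⟩
  · intro X _ _ _ k _ _ H _ _ _ T Φ _ hk hTΦ hT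
    exact stmt6_general hk hTΦ hT
  · intro X _ _ _ k _ H _ _ _ T Φ _ hk hTΦ hT
    exact stmt6_general hk hTΦ (IsC0Universal.isCCUniversal fun g => hT g)
  · intro X _ _ _ k _ _ H _ _ _ T Φ _ hk hTΦ hT
    exact stmt6_general hk hTΦ (IsC0Universal.isCCUniversal hT)
end
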